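/- Let Ω ⊆ ℝ³ be open and let f = (f₁,f₂,f₃) : Ω → ℝ³ be a smooth conformal map. Write λ = J_F and F = f₁ + i f₂. Then each of the following eight functions w₀ satisfies Z²w₀ = 0 on Ω: λ⁻¹·(f₃² + (f₁² + f₂²)²), λ⁻¹·(f₃f₂ − f₁(f₁² + f₂²)), λ⁻¹·(f₃f₁ + f₂(f₁² + f₂²)), λ⁻¹·(f₁² + f₂²), λ⁻¹·f₁, λ⁻¹·f₂, λ⁻¹·f₃, and λ⁻¹. In particular S_CR(f) = (1/2)·J_F·Z²(J_F⁻¹) = 0 on Ω. -/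

import Mathlib

noncomputable section

open Complex

/-- The underlying space of the first Heisenberg group: ℝ³ with coordinates (x, y, t). -/
abbrev Heis : Type := ℝ × ℝ × ℝ

/-- The left-invariant vector field X = ∂/∂x + 2y ∂/∂t, as a derivation. -/
def XD {E : Type*} [NormedAddCommGroup E] [NormedSpace ℝ E] (u : Heis → E) (p : Heis) : E :=
  fderiv ℝ u p (1, 0, 2 * p.2.1)

/-- The left-invariant vector field Y = ∂/∂y − 2x ∂/∂t, as a derivation. -/
def YD {E : Type*} [NormedAddCommGroup E] [NormedSpace ℝ E] (u : Heis → E) (p : Heis) : E :=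
  fderiv ℝ u p (0, 1, -(2 * p.1))

/-- The vector field T = ∂/∂t, as a derivation. -/
def TD {E : Type*} [NormedAddCommGroup E] [NormedSpace ℝ E] (u : Heis → E) (p : Heis) : E :=
  fderiv ℝ u p (0, 0, 1)

/-- Z = (X − iY)/2. -/
def ZD (u : Heis → ℂ) (p : Heis) : ℂ := (XD u p - Complex.I * YD u p) / 2

/-- Z̄ = (X + iY)/2. -/
def ZbD (u : Heis → ℂ) (p : Heis) : ℂ := (XD u p + Complex.I * YD u p) / 2

/-- The complexification F = f₁ + i f₂ of the horizontal components. -/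
def CF (f1 f2 : Heis → ℝ) : Heis → ℂ := fun p => (f1 p : ℂ) + (f2 p : ℂ) * Complex.I

/-- Complexification of a real-valued function. -/
def Cplx (u : Heis → ℝ) : Heis → ℂ := fun p => (u p : ℂ)

/-- The horizontal Jacobian J_F = Xf₁·Yf₂ − Yf₁·Xf₂. -/
def JF (f1 f2 : Heis → ℝ) (p : Heis) : ℝ := XD f1 p * YD f2 p - YD f1 p * XD f2 p

/-- The contact equations on Ω. -/
def ContactOn (f1 f2 f3 : Heis → ℝ) (Ω : Set Heis) : Prop :=
  ∀ p ∈ Ω, XD f3 p - 2 * f2 p * XD f1 p + 2 * f1 p * XD f2 p = 0 ∧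
           YD f3 p - 2 * f2 p * YD f1 p + 2 * f1 p * YD f2 p = 0

/-- f = (f₁,f₂,f₃) is conformal on Ω: smooth, contact, J_F > 0, and the conformality
equations hold. -/
def ConformalOn (f1 f2 f3 : Heis → ℝ) (Ω : Set Heis) : Prop :=
  ContDiffOn ℝ (⊤ : ℕ∞) f1 Ω ∧ ContDiffOn ℝ (⊤ : ℕ∞) f2 Ω ∧ ContDiffOn ℝ (⊤ : ℕ∞) f3 Ω ∧
  ContactOn f1 f2 f3 Ω ∧ (∀ p ∈ Ω, 0 < JF f1 f2 p) ∧
  ∀ p ∈ Ω, (XD f1 p) ^ 2 + (XD f2 p) ^ 2 = (YD f1 p) ^ 2 + (YD f2 p) ^ 2 ∧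
           XD f1 p * YD f1 p + XD f2 p * YD f2 p = 0

/-- The sub-Laplacian Δ_H = X² + Y². -/
def LapH {E : Type*} [NormedAddCommGroup E] [NormedSpace ℝ E] (u : Heis → E) (p : Heis) : E :=
  XD (XD u) p + YD (YD u) p

/-- The CR Schwarzian derivative S_CR(f) = (1/2)·J_F·Z²(J_F⁻¹). -/
def SCR (f1 f2 : Heis → ℝ) (p : Heis) : ℂ :=
  (1 / 2 : ℂ) * (JF f1 f2 p : ℂ) * ZD (ZD (fun q => (((JF f1 f2 q)⁻¹ : ℝ) : ℂ))) p

/-- The classical type Schwarzian S_CL(f) = Z³F/ZF − (3/2)(Z²F/ZF)². -/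
def SCL (f1 f2 : Heis → ℝ) (p : Heis) : ℂ :=
  ZD (ZD (ZD (CF f1 f2))) p / ZD (CF f1 f2) p
    - (3 / 2 : ℂ) * (ZD (ZD (CF f1 f2)) p / ZD (CF f1 f2) p) ^ 2

/-- The Preschwarzian Pf = Z(ln J_F). -/
def PS (f1 f2 : Heis → ℝ) (p : Heis) : ℂ := ZD (Cplx (fun q => Real.log (JF f1 f2 q))) p

/-- The map (f₁,f₂,f₃) packaged as a map Heis → Heis. -/
def Fmap (f1 f2 f3 : Heis → ℝ) (p : Heis) : Heis := (f1 p, f2 p, f3 p)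

/-!
Write `F̄` for the conjugate of `F`, and `W = f₃ - i|F|²`. Conformality says `Z̄F = 0`, that is
`ZF̄ = 0`, and then the contact equations say `ZW = 0` and `Z̄W = -2iF·Z̄F̄`. Since
`[Z, Z̄] = -2iT` and `[Z, T] = 0`, the operator `Z²` annihilates `Z̄u` whenever `Zu = 0`. Hence
`b = Z̄F̄` and `Fb = (i/2)Z̄W` both solve `Z²w = 0`, and their Wronskian `b²·ZF` is annihilated by
`Z`. As `J_F = ZF·b`, the function `J_F⁻¹` is `b` divided by this Wronskian. Solutions of
`Z²w = 0` form a module over the functions annihilated by `Z`, so `J_F⁻¹(α + βF)` is a solution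
whenever `Zα = Zβ = 0`; each of the eight functions has this form with `α` and `β` polynomials in
`F̄` and `W`.
-/

open VectorField
open scoped ContDiff

section HorizontalDerivatives

variable {E : Type*} [NormedAddCommGroup E] [NormedSpace ℝ E] {u : Heis → E} {p : Heis}

/-- The vector field `X` itself, along which `XD` differentiates. -/
def xField (q : Heis) : Heis := (1, 0, 2 * q.2.1)

/-- The vector field `Y` itself, along which `YD` differentiates. -/
def yField (q : Heis) : Heis := (0, 1, -(2 * q.1))

lemma contDiff_xField {n : ℕ∞ω} : ContDiff ℝ n xField := by
  unfold xField; fun_prop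

lemma contDiff_yField {n : ℕ∞ω} : ContDiff ℝ n yField := by
  unfold yField; fun_prop

lemma fderiv_xField (v : Heis) : fderiv ℝ xField p v = (0, 0, 2 * v.2.1) := by
  have hy : HasFDerivAt (fun q : Heis => q.2.1) _ p := (hasFDerivAt_snd (𝕜 := ℝ)).fst
  have hX : HasFDerivAt xField _ p :=
    (hasFDerivAt_const 1 p).prodMk ((hasFDerivAt_const 0 p).prodMk (hy.const_mul 2))
  simp [hX.fderiv]

lemma fderiv_yField (v : Heis) : fderiv ℝ yField p v = (0, 0, -(2 * v.1)) := by
  have hx : HasFDerivAt (fun q : Heis => q.1) _ p := hasFDerivAt_fst (𝕜 := ℝ)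
  have hY : HasFDerivAt yField _ p :=
    (hasFDerivAt_const 0 p).prodMk ((hasFDerivAt_const 1 p).prodMk (hx.const_mul 2).fun_neg)
  simp [hY.fderiv]

lemma lieBracket_xField_yField :
    lieBracket ℝ xField yField p = (-4 : ℝ) • ((0, 0, 1) : Heis) := by
  simp only [lieBracket, fderiv_xField, fderiv_yField, xField, yField]
  norm_num

lemma lieBracket_xField_const : lieBracket ℝ xField (fun _ => (0, 0, 1)) p = 0 := by
  simp [lieBracket, fderiv_xField]

lemma lieBracket_yField_const : lieBracket ℝ yField (fun _ => (0, 0, 1)) p = 0 := by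
  simp [lieBracket, fderiv_yField]

lemma differentiableAt_xField : DifferentiableAt ℝ xField p :=
  contDiff_xField.contDiffAt.differentiableAt one_ne_zero

lemma differentiableAt_yField : DifferentiableAt ℝ yField p :=
  contDiff_yField.contDiffAt.differentiableAt one_ne_zero

lemma XD_YD_sub_YD_XD (hu : ContDiffAt ℝ 2 u p) :
    XD (YD u) p - YD (XD u) p = (-4 : ℝ) • TD u p := by
  rw [TD, ← map_smul, ← lieBracket_xField_yField]
  exact (fderiv_apply_lieBracket hu (by simp)
    differentiableAt_yField differentiableAt_xField).symm

lemma XD_TD (hu : ContDiffAt ℝ 2 u p) : XD (TD u) p = TD (XD u) p := by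
  rw [← sub_eq_zero, ← map_zero (fderiv ℝ u p), ← lieBracket_xField_const]
  exact (fderiv_apply_lieBracket hu (by simp)
    (differentiableAt_const _) differentiableAt_xField).symm

lemma YD_TD (hu : ContDiffAt ℝ 2 u p) : YD (TD u) p = TD (YD u) p := by
  rw [← sub_eq_zero, ← map_zero (fderiv ℝ u p), ← lieBracket_yField_const]
  exact (fderiv_apply_lieBracket hu (by simp)
    (differentiableAt_const _) differentiableAt_yField).symm

variable {n : ℕ∞ω}

lemma contDiffAt_XD (hu : ContDiffAt ℝ (n + 1) u p) : ContDiffAt ℝ n (XD u) p :=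
  (hu.fderiv_right_succ).clm_apply contDiff_xField.contDiffAt

lemma contDiffAt_YD (hu : ContDiffAt ℝ (n + 1) u p) : ContDiffAt ℝ n (YD u) p :=
  (hu.fderiv_right_succ).clm_apply contDiff_yField.contDiffAt

lemma contDiffAt_TD (hu : ContDiffAt ℝ (n + 1) u p) : ContDiffAt ℝ n (TD u) p :=
  (hu.fderiv_right_succ).clm_apply contDiffAt_const

end HorizontalDerivatives

section ComplexDerivatives

variable {u v : Heis → ℂ} {p : Heis} {Ω : Set Heis} {n : ℕ∞ω}

lemma contDiffAt_ZD (hu : ContDiffAt ℝ (n + 1) u p) : ContDiffAt ℝ n (ZD u) p :=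
  ((contDiffAt_XD hu).sub (contDiffAt_const.mul (contDiffAt_YD hu))).div_const 2

lemma contDiffAt_ZbD (hu : ContDiffAt ℝ (n + 1) u p) : ContDiffAt ℝ n (ZbD u) p :=
  ((contDiffAt_XD hu).add (contDiffAt_const.mul (contDiffAt_YD hu))).div_const 2

lemma ZD_const (c : ℂ) : ZD (fun _ => c) = 0 := by
  ext p; simp [ZD, XD, YD]

lemma ZD_add (hu : DifferentiableAt ℝ u p) (hv : DifferentiableAt ℝ v p) :
    ZD (u + v) p = ZD u p + ZD v p := by
  simp only [ZD, XD, YD, fderiv_add hu hv, add_apply]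
  ring

lemma ZD_sub (hu : DifferentiableAt ℝ u p) (hv : DifferentiableAt ℝ v p) :
    ZD (u - v) p = ZD u p - ZD v p := by
  simp only [ZD, XD, YD, fderiv_sub hu hv, sub_apply]
  ring

lemma ZD_mul (hu : DifferentiableAt ℝ u p) (hv : DifferentiableAt ℝ v p) :
    ZD (u * v) p = ZD u p * v p + u p * ZD v p := by
  simp only [ZD, XD, YD, fderiv_mul hu hv, add_apply, smul_apply, smul_eq_mul]
  ring

lemma ZD_const_smul (c : ℂ) (hu : DifferentiableAt ℝ u p) : ZD (c • u) p = c * ZD u p := by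
  simp only [ZD, XD, YD, fderiv_const_smul hu, smul_apply, smul_eq_mul]
  ring

lemma fderiv_star_apply (u : Heis → ℂ) (w : Heis) :
    fderiv ℝ (star u) p w = star (fderiv ℝ u p w) :=
  DFunLike.congr_fun fderiv_star w

lemma ZD_star (u : Heis → ℂ) : ZD (star u) = star (ZbD u) := by
  ext p
  simp [ZD, ZbD, XD, YD, fderiv_star_apply, sub_eq_add_neg]

lemma ZbD_star (u : Heis → ℂ) : ZbD (star u) = star (ZD u) := by
  rw [← star_star u, ZD_star, star_star, star_star]

lemma eqOn_ZD (hΩ : IsOpen Ω) (h : Ω.EqOn u v) : Ω.EqOn (ZD u) (ZD v) := fun p hp => by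
  have e : fderiv ℝ u p = fderiv ℝ v p := (h.eventuallyEq_of_mem (hΩ.mem_nhds hp)).fderiv_eq
  simp only [ZD, XD, YD, e]

lemma fderiv_ZD (hu : ContDiffAt ℝ 2 u p) (w : Heis) :
    fderiv ℝ (ZD u) p w = (fderiv ℝ (XD u) p w - I * fderiv ℝ (YD u) p w) / 2 := by
  have hX := (contDiffAt_XD (n := 1) hu).differentiableAt one_ne_zero
  have hY := (contDiffAt_YD (n := 1) hu).differentiableAt one_ne_zero
  have e : ZD u = (2⁻¹ : ℂ) • (XD u - I • YD u) := by
    ext q; simp [ZD, div_eq_inv_mul]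
  rw [e, fderiv_const_smul (hX.sub (hY.const_smul I)), fderiv_sub hX (hY.const_smul I),
    fderiv_const_smul hY]
  simp [div_eq_inv_mul]

lemma fderiv_ZbD (hu : ContDiffAt ℝ 2 u p) (w : Heis) :
    fderiv ℝ (ZbD u) p w = (fderiv ℝ (XD u) p w + I * fderiv ℝ (YD u) p w) / 2 := by
  have hX := (contDiffAt_XD (n := 1) hu).differentiableAt one_ne_zero
  have hY := (contDiffAt_YD (n := 1) hu).differentiableAt one_ne_zero
  have e : ZbD u = (2⁻¹ : ℂ) • (XD u + I • YD u) := by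
    ext q; simp [ZbD, div_eq_inv_mul]
  rw [e, fderiv_const_smul (hX.add (hY.const_smul I)), fderiv_add hX (hY.const_smul I),
    fderiv_const_smul hY]
  simp [div_eq_inv_mul, mul_add]

lemma ZD_ZbD_sub_ZbD_ZD (hu : ContDiffAt ℝ 2 u p) :
    ZD (ZbD u) p - ZbD (ZD u) p = -2 * I * TD u p := by
  have hXY := XD_YD_sub_YD_XD hu
  rw [real_smul] at hXY
  push_cast at hXY
  simp only [ZD, ZbD, XD, YD, fderiv_ZD hu, fderiv_ZbD hu] at hXY ⊢
  linear_combination (I / 2) * hXY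

lemma ZD_TD (hu : ContDiffAt ℝ 2 u p) : ZD (TD u) p = TD (ZD u) p := by
  rw [ZD, XD_TD hu, YD_TD hu, TD, TD, TD, fderiv_ZD hu]

end ComplexDerivatives

section AntiCR

variable {Ω : Set Heis} {u v w F b α β : Heis → ℂ} {p : Heis}

/-- The algebra of anti-CR functions on `Ω`: smooth functions annihilated by `Z`. They are the
constants for the differential operator `Z`. Values outside `Ω` are unconstrained. -/
def antiCR (Ω : Set Heis) : Subalgebra ℂ (Heis → ℂ) where
  carrier := {u | ∀ p ∈ Ω, ContDiffAt ℝ ∞ u p ∧ ZD u p = 0}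
  add_mem' hu hv p hp := ⟨(hu p hp).1.add (hv p hp).1, by
    rw [ZD_add ((hu p hp).1.differentiableAt (by simp)) ((hv p hp).1.differentiableAt (by simp)),
      (hu p hp).2, (hv p hp).2, add_zero]⟩
  mul_mem' hu hv p hp := ⟨(hu p hp).1.mul (hv p hp).1, by
    rw [ZD_mul ((hu p hp).1.differentiableAt (by simp)) ((hv p hp).1.differentiableAt (by simp)),
      (hu p hp).2, (hv p hp).2, zero_mul, mul_zero, add_zero]⟩
  algebraMap_mem' c p _ := ⟨contDiffAt_const, congr_fun (ZD_const c) p⟩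

lemma ZD_mul_of_mem_antiCR (hα : α ∈ antiCR Ω) (hp : p ∈ Ω) (hu : DifferentiableAt ℝ u p) :
    ZD (α * u) p = α p * ZD u p := by
  rw [ZD_mul ((hα p hp).1.differentiableAt (by simp)) hu, (hα p hp).2, zero_mul, zero_add]

lemma inv_mem_antiCR (hΩ : IsOpen Ω) (hu : u ∈ antiCR Ω) (hne : ∀ p ∈ Ω, u p ≠ 0) :
    u⁻¹ ∈ antiCR Ω := fun p hp => by
  have hinv : ContDiffAt ℝ ∞ u⁻¹ p := (hu p hp).1.inv (hne p hp)
  have hone : Ω.EqOn (u * u⁻¹) (fun _ => 1) := fun q hq => mul_inv_cancel₀ (hne q hq)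
  have hZ := eqOn_ZD hΩ hone hp
  rw [ZD_mul_of_mem_antiCR hu hp (hinv.differentiableAt (by simp)), ZD_const] at hZ
  exact ⟨hinv, (mul_eq_zero.mp hZ).resolve_left (hne p hp)⟩

/-- The smooth solutions on the open set `Ω` of `Z²w = 0`, the functions affine along `Z`, as a
module over the anti-CR functions. -/
def zAffine (hΩ : IsOpen Ω) : Submodule (antiCR Ω) (Heis → ℂ) where
  carrier := {w | ∀ p ∈ Ω, ContDiffAt ℝ ∞ w p ∧ ZD (ZD w) p = 0}
  zero_mem' p _ := ⟨contDiffAt_const, by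
    rw [show (0 : Heis → ℂ) = fun _ => 0 from rfl, ZD_const]
    exact congr_fun (ZD_const 0) p⟩
  add_mem' {u v} hu hv p hp := by
    have hZ : Ω.EqOn (ZD (u + v)) (ZD u + ZD v) := fun q hq =>
      ZD_add ((hu q hq).1.differentiableAt (by simp)) ((hv q hq).1.differentiableAt (by simp))
    refine ⟨(hu p hp).1.add (hv p hp).1, ?_⟩
    rw [eqOn_ZD hΩ hZ hp,
      ZD_add ((contDiffAt_ZD (n := ∞) (hu p hp).1).differentiableAt (by simp))
        ((contDiffAt_ZD (n := ∞) (hv p hp).1).differentiableAt (by simp)),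
      (hu p hp).2, (hv p hp).2, add_zero]
  smul_mem' α w hw p hp := by
    have hZ : Ω.EqOn (ZD (α • w)) (α * ZD w) := fun q hq =>
      ZD_mul_of_mem_antiCR α.2 hq ((hw q hq).1.differentiableAt (by simp))
    refine ⟨(α.2 p hp).1.mul (hw p hp).1, ?_⟩
    rw [eqOn_ZD hΩ hZ hp, ZD_mul_of_mem_antiCR α.2 hp
      ((contDiffAt_ZD (n := ∞) (hw p hp).1).differentiableAt (by simp)), (hw p hp).2,
      mul_zero]

variable {hΩ : IsOpen Ω}

lemma mem_zAffine_of_eqOn (hu : u ∈ zAffine hΩ) (h : Ω.EqOn v u) : v ∈ zAffine hΩ := fun p hp =>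
  ⟨(hu p hp).1.congr_of_eventuallyEq (h.eventuallyEq_of_mem (hΩ.mem_nhds hp)),
    (eqOn_ZD hΩ (eqOn_ZD hΩ h) hp).trans (hu p hp).2⟩

lemma mul_mem_zAffine (hα : α ∈ antiCR Ω) (hw : w ∈ zAffine hΩ) : α * w ∈ zAffine hΩ :=
  (zAffine hΩ).smul_mem ⟨α, hα⟩ hw

lemma wronskian_mem_antiCR (hu : u ∈ zAffine hΩ) (hv : v ∈ zAffine hΩ) :
    u * ZD v - v * ZD u ∈ antiCR Ω := fun p hp => by
  obtain ⟨hu, hZZu⟩ := hu p hp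
  obtain ⟨hv, hZZv⟩ := hv p hp
  have hZu : ContDiffAt ℝ ∞ (ZD u) p := contDiffAt_ZD hu
  have hZv : ContDiffAt ℝ ∞ (ZD v) p := contDiffAt_ZD hv
  refine ⟨(hu.mul hZv).sub (hv.mul hZu), ?_⟩
  replace hu := hu.differentiableAt (by simp)
  replace hv := hv.differentiableAt (by simp)
  replace hZu := hZu.differentiableAt (by simp)
  replace hZv := hZv.differentiableAt (by simp)
  rw [ZD_sub (hu.mul hZv) (hv.mul hZu), ZD_mul hu hZv, ZD_mul hv hZu, hZZu, hZZv]
  ring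

-- `[Z, Z̄] = -2iT`, and `T` commutes with `Z`.
lemma ZbD_mem_zAffine (hu : u ∈ antiCR Ω) : ZbD u ∈ zAffine hΩ := fun p hp => by
  have hC2 : ∀ q ∈ Ω, ContDiffAt ℝ 2 u q := fun q hq => (hu q hq).1.of_le (by norm_cast)
  have hfderiv : ∀ q ∈ Ω, fderiv ℝ (ZD u) q = 0 := fun q hq => by
    have hZ : Ω.EqOn (ZD u) (fun _ => 0) := fun r hr => (hu r hr).2
    rw [(hZ.eventuallyEq_of_mem (hΩ.mem_nhds hq)).fderiv_eq, fderiv_const_apply]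
  have hZZb : Ω.EqOn (ZD (ZbD u)) ((-2 * I) • TD u) := fun q hq => by
    have hZbZ : ZbD (ZD u) q = 0 := by simp [ZbD, XD, YD, hfderiv q hq]
    simpa [hZbZ] using ZD_ZbD_sub_ZbD_ZD (hC2 q hq)
  have hTZ : TD (ZD u) p = 0 := by simp [TD, hfderiv p hp]
  refine ⟨contDiffAt_ZbD (hu p hp).1, ?_⟩
  rw [eqOn_ZD hΩ hZZb hp,
    ZD_const_smul _ ((contDiffAt_TD (n := 1) (hC2 p hp)).differentiableAt one_ne_zero),
    ZD_TD (hC2 p hp), hTZ, mul_zero]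

-- `ZF · b²` is the Wronskian of `b` and `Fb`, so `(ZF · b)⁻¹` is an anti-CR multiple of `b`.
lemma inv_mul_mem_zAffine (hb : b ∈ zAffine hΩ) (hFb : F * b ∈ zAffine hΩ)
    (hF : ∀ p ∈ Ω, DifferentiableAt ℝ F p) (hne : ∀ p ∈ Ω, ZD F p * b p ≠ 0)
    (hα : α ∈ antiCR Ω) (hβ : β ∈ antiCR Ω) :
    (ZD F * b)⁻¹ * (α + β * F) ∈ zAffine hΩ := by
  have hb0 : ∀ p ∈ Ω, b p ≠ 0 := fun p hp => right_ne_zero_of_mul (hne p hp)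
  have hwronskian : Ω.EqOn (b * ZD (F * b) - F * b * ZD b) (ZD F * b * b) := fun p hp => by
    simp only [Pi.sub_apply, Pi.mul_apply,
      ZD_mul (hF p hp) ((hb p hp).1.differentiableAt (by simp))]
    ring
  have hκ : (b * ZD (F * b) - F * b * ZD b)⁻¹ ∈ antiCR Ω :=
    inv_mem_antiCR hΩ (wronskian_mem_antiCR hb hFb) fun p hp => by
      rw [hwronskian hp]
      exact mul_ne_zero (hne p hp) (hb0 p hp)
  refine mem_zAffine_of_eqOn
    (add_mem (mul_mem_zAffine (mul_mem hκ hα) hb) (mul_mem_zAffine (mul_mem hκ hβ) hFb))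
    fun p hp => ?_
  have hZF := left_ne_zero_of_mul (hne p hp)
  have := hb0 p hp
  have hw := hwronskian hp
  simp only [Pi.add_apply, Pi.mul_apply, Pi.inv_apply, hw]
  field_simp

end AntiCR

section Conformal

variable {f f1 f2 f3 : Heis → ℝ} {p : Heis} {Ω : Set Heis}

lemma fderiv_Cplx (h : DifferentiableAt ℝ f p) (v : Heis) :
    fderiv ℝ (Cplx f) p v = fderiv ℝ f p v := by
  have hf : HasFDerivAt (Cplx f) _ p := ofRealCLM.hasFDerivAt.comp p h.hasFDerivAt
  simp [hf.fderiv]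

lemma differentiableAt_Cplx (h : DifferentiableAt ℝ f p) : DifferentiableAt ℝ (Cplx f) p :=
  ofRealCLM.differentiableAt.comp p h

lemma contDiffAt_Cplx {n : ℕ∞ω} (h : ContDiffAt ℝ n f p) : ContDiffAt ℝ n (Cplx f) p :=
  ofRealCLM.contDiff.contDiffAt.comp p h

lemma contDiffAt_CF {n : ℕ∞ω} (h1 : ContDiffAt ℝ n f1 p) (h2 : ContDiffAt ℝ n f2 p) :
    ContDiffAt ℝ n (CF f1 f2) p :=
  (contDiffAt_Cplx h1).add ((contDiffAt_Cplx h2).mul contDiffAt_const)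

lemma differentiableAt_CF (h1 : DifferentiableAt ℝ f1 p) (h2 : DifferentiableAt ℝ f2 p) :
    DifferentiableAt ℝ (CF f1 f2) p :=
  (differentiableAt_Cplx h1).add ((differentiableAt_Cplx h2).mul_const I)

lemma contDiffAt_star {n : ℕ∞ω} {u : Heis → ℂ} (hu : ContDiffAt ℝ n u p) :
    ContDiffAt ℝ n (star u) p :=
  conjCLE.contDiff.contDiffAt.comp p hu

lemma fderiv_CF (h1 : DifferentiableAt ℝ f1 p) (h2 : DifferentiableAt ℝ f2 p) (v : Heis) :
    fderiv ℝ (CF f1 f2) p v = fderiv ℝ f1 p v + fderiv ℝ f2 p v * I := by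
  have hF : CF f1 f2 = Cplx f1 + I • Cplx f2 := by
    ext q; simp [CF, Cplx, mul_comm]
  have hd1 := differentiableAt_Cplx h1
  have hd2 := differentiableAt_Cplx h2
  rw [hF, fderiv_add hd1 (hd2.const_smul I), fderiv_const_smul hd2]
  simp [fderiv_Cplx h1, fderiv_Cplx h2, mul_comm]

/-- The function `f₃ - i|F|²`, the pullback of the anti-CR function `t - i|z|²` under `f`. -/
def contactPotential (f1 f2 f3 : Heis → ℝ) : Heis → ℂ :=
  Cplx f3 - I • (CF f1 f2 * star (CF f1 f2))

-- The contact equations say `df₃ = i(F̄ dF - F dF̄)` on horizontal directions.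
lemma fderiv_contactPotential (h1 : DifferentiableAt ℝ f1 p) (h2 : DifferentiableAt ℝ f2 p)
    (h3 : DifferentiableAt ℝ f3 p) {v : Heis}
    (hv : fderiv ℝ f3 p v - 2 * f2 p * fderiv ℝ f1 p v + 2 * f1 p * fderiv ℝ f2 p v = 0) :
    fderiv ℝ (contactPotential f1 f2 f3) p v =
      -2 * I * CF f1 f2 p * fderiv ℝ (star (CF f1 f2)) p v := by
  have hF := differentiableAt_CF h1 h2
  have hFstar : DifferentiableAt ℝ (star (CF f1 f2)) p := hF.star
  have hFF := hF.mul hFstar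
  have hv3 : fderiv ℝ f3 p v = 2 * f2 p * fderiv ℝ f1 p v - 2 * f1 p * fderiv ℝ f2 p v := by
    linarith
  rw [contactPotential, fderiv_sub (differentiableAt_Cplx h3) (hFF.const_smul I),
    fderiv_const_smul hFF, fderiv_mul hF hFstar]
  apply Complex.ext <;>
    simp [fderiv_Cplx h3, fderiv_star_apply, fderiv_CF h1 h2, hv3, CF] <;> ring

section Contact

variable (hcontact : ContactOn f1 f2 f3 Ω) (hp : p ∈ Ω) (h1 : DifferentiableAt ℝ f1 p)
  (h2 : DifferentiableAt ℝ f2 p) (h3 : DifferentiableAt ℝ f3 p)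
include hcontact hp h1 h2 h3

lemma ContactOn.ZD_contactPotential :
    ZD (contactPotential f1 f2 f3) p = -2 * I * CF f1 f2 p * ZD (star (CF f1 f2)) p := by
  rw [ZD, ZD, XD, YD, fderiv_contactPotential h1 h2 h3 (hcontact p hp).1,
    fderiv_contactPotential h1 h2 h3 (hcontact p hp).2, XD, YD]
  ring

lemma ContactOn.ZbD_contactPotential :
    ZbD (contactPotential f1 f2 f3) p = -2 * I * CF f1 f2 p * ZbD (star (CF f1 f2)) p := by
  rw [ZbD, ZbD, XD, YD, fderiv_contactPotential h1 h2 h3 (hcontact p hp).1,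
    fderiv_contactPotential h1 h2 h3 (hcontact p hp).2, XD, YD]
  ring

end Contact

lemma cauchyRiemann_of_conformal {a b c d : ℝ} (hJ : 0 < a * d - c * b)
    (hnorm : a ^ 2 + b ^ 2 = c ^ 2 + d ^ 2) (horth : a * c + b * d = 0) : d = a ∧ c = -b := by
  have hsq : (a * d - c * b) ^ 2 = (a ^ 2 + b ^ 2) ^ 2 := by
    linear_combination (-(a ^ 2 + b ^ 2)) * hnorm - (a * c + b * d) * horth
  have hJ_eq : a * d - c * b = a ^ 2 + b ^ 2 :=
    (pow_left_inj₀ hJ.le (by positivity) two_ne_zero).mp hsq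
  have hsum : (d - a) ^ 2 + (c + b) ^ 2 = 0 := by linear_combination -hnorm - 2 * hJ_eq
  obtain ⟨hda, hcb⟩ := (add_eq_zero_iff_of_nonneg (sq_nonneg _) (sq_nonneg _)).mp hsum
  exact ⟨sub_eq_zero.mp (sq_eq_zero_iff.mp hda), eq_neg_of_add_eq_zero_left (sq_eq_zero_iff.mp hcb)⟩

lemma ofReal_JF_eq (h1 : DifferentiableAt ℝ f1 p) (h2 : DifferentiableAt ℝ f2 p) :
    (JF f1 f2 p : ℂ) = ZD (CF f1 f2) p * star (ZD (CF f1 f2) p) -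
      ZbD (CF f1 f2) p * star (ZbD (CF f1 f2) p) := by
  apply Complex.ext <;> simp [ZD, ZbD, XD, YD, JF, fderiv_CF h1 h2] <;> ring

namespace ConformalOn

variable (hconf : ConformalOn f1 f2 f3 Ω) (hΩ : IsOpen Ω)
include hconf hΩ

lemma contDiffAt (hp : p ∈ Ω) :
    ContDiffAt ℝ ∞ f1 p ∧ ContDiffAt ℝ ∞ f2 p ∧ ContDiffAt ℝ ∞ f3 p :=
  ⟨hconf.1.contDiffAt (hΩ.mem_nhds hp), hconf.2.1.contDiffAt (hΩ.mem_nhds hp),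
    hconf.2.2.1.contDiffAt (hΩ.mem_nhds hp)⟩

lemma differentiableAt (hp : p ∈ Ω) :
    DifferentiableAt ℝ f1 p ∧ DifferentiableAt ℝ f2 p ∧ DifferentiableAt ℝ f3 p :=
  (hconf.contDiffAt hΩ hp).imp (·.differentiableAt (by simp))
    (·.imp (·.differentiableAt (by simp)) (·.differentiableAt (by simp)))

lemma ZbD_CF_eq_zero (hp : p ∈ Ω) : ZbD (CF f1 f2) p = 0 := by
  obtain ⟨h1, h2, -⟩ := hconf.differentiableAt hΩ hp
  obtain ⟨-, -, -, -, hJ, hCR⟩ := hconf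
  obtain ⟨hY2, hY1⟩ := cauchyRiemann_of_conformal (hJ p hp) (hCR p hp).1 (hCR p hp).2
  simp only [XD, YD] at hY1 hY2
  apply Complex.ext <;> simp [ZbD, XD, YD, fderiv_CF h1 h2, hY1, hY2]

lemma star_CF_mem_antiCR : star (CF f1 f2) ∈ antiCR Ω := fun p hp => by
  obtain ⟨h1, h2, -⟩ := hconf.contDiffAt hΩ hp
  refine ⟨contDiffAt_star (contDiffAt_CF h1 h2), ?_⟩
  simp [ZD_star, hconf.ZbD_CF_eq_zero hΩ hp]

lemma contactPotential_mem_antiCR : contactPotential f1 f2 f3 ∈ antiCR Ω := fun p hp => by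
  obtain ⟨h1, h2, h3⟩ := hconf.contDiffAt hΩ hp
  obtain ⟨d1, d2, d3⟩ := hconf.differentiableAt hΩ hp
  have hF := contDiffAt_CF h1 h2
  refine ⟨(contDiffAt_Cplx h3).sub ((hF.mul (contDiffAt_star hF)).const_smul I), ?_⟩
  rw [hconf.2.2.2.1.ZD_contactPotential hp d1 d2 d3, (hconf.star_CF_mem_antiCR hΩ p hp).2,
    mul_zero]

lemma ofReal_JF (hp : p ∈ Ω) : (JF f1 f2 p : ℂ) = ZD (CF f1 f2) p * ZbD (star (CF f1 f2)) p := by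
  obtain ⟨h1, h2, -⟩ := hconf.differentiableAt hΩ hp
  simp [ofReal_JF_eq h1 h2, hconf.ZbD_CF_eq_zero hΩ hp, ZbD_star]

lemma CF_mul_ZbD_star_mem_zAffine : CF f1 f2 * ZbD (star (CF f1 f2)) ∈ zAffine hΩ := by
  refine mem_zAffine_of_eqOn (mul_mem_zAffine ((antiCR Ω).algebraMap_mem (I / 2))
    (ZbD_mem_zAffine (hconf.contactPotential_mem_antiCR hΩ))) fun p hp => ?_
  obtain ⟨h1, h2, h3⟩ := hconf.differentiableAt hΩ hp
  have hZb := hconf.2.2.2.1.ZbD_contactPotential hp h1 h2 h3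
  simp only [Pi.mul_apply, Pi.algebraMap_apply, hZb, Algebra.algebraMap_self_apply]
  linear_combination (CF f1 f2 p * ZbD (star (CF f1 f2)) p) * I_sq

lemma inv_JF_mul_mem_zAffine {α β : Heis → ℂ} {u : Heis → ℝ} (hα : α ∈ antiCR Ω)
    (hβ : β ∈ antiCR Ω) (hu : ∀ p ∈ Ω, (u p : ℂ) = α p + β p * CF f1 f2 p) :
    Cplx (fun q => (JF f1 f2 q)⁻¹ * u q) ∈ zAffine hΩ := by
  refine mem_zAffine_of_eqOn (inv_mul_mem_zAffine
    (ZbD_mem_zAffine (hconf.star_CF_mem_antiCR hΩ)) (hconf.CF_mul_ZbD_star_mem_zAffine hΩ)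
    (fun p hp => ?_) (fun p hp => ?_) hα hβ) fun p hp => ?_
  · obtain ⟨h1, h2, -⟩ := hconf.differentiableAt hΩ hp
    exact differentiableAt_CF h1 h2
  · rw [← hconf.ofReal_JF hΩ hp]
    exact ofReal_ne_zero.mpr (hconf.2.2.2.2.1 p hp).ne'
  · simp [Cplx, hu p hp, hconf.ofReal_JF hΩ hp]

end ConformalOn

end Conformal

/-- for a smooth conformal map f, each of the eight functions w₀ from the
conformal-vector-field list satisfies Z²w₀ = 0; in particular S_CR(f) = 0 on Ω. -/
theorem stmt_3 (Ω : Set Heis) (hΩ : IsOpen Ω) (f1 f2 f3 : Heis → ℝ)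
    (hconf : ConformalOn f1 f2 f3 Ω) :
    (∀ p ∈ Ω, ZD (ZD (Cplx (fun q =>
        (JF f1 f2 q)⁻¹ * (f3 q ^ 2 + (f1 q ^ 2 + f2 q ^ 2) ^ 2)))) p = 0) ∧
    (∀ p ∈ Ω, ZD (ZD (Cplx (fun q =>
        (JF f1 f2 q)⁻¹ * (f3 q * f2 q - f1 q * (f1 q ^ 2 + f2 q ^ 2))))) p = 0) ∧
    (∀ p ∈ Ω, ZD (ZD (Cplx (fun q =>
        (JF f1 f2 q)⁻¹ * (f3 q * f1 q + f2 q * (f1 q ^ 2 + f2 q ^ 2))))) p = 0) ∧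
    (∀ p ∈ Ω, ZD (ZD (Cplx (fun q =>
        (JF f1 f2 q)⁻¹ * (f1 q ^ 2 + f2 q ^ 2)))) p = 0) ∧
    (∀ p ∈ Ω, ZD (ZD (Cplx (fun q => (JF f1 f2 q)⁻¹ * f1 q))) p = 0) ∧
    (∀ p ∈ Ω, ZD (ZD (Cplx (fun q => (JF f1 f2 q)⁻¹ * f2 q))) p = 0) ∧
    (∀ p ∈ Ω, ZD (ZD (Cplx (fun q => (JF f1 f2 q)⁻¹ * f3 q))) p = 0) ∧
    (∀ p ∈ Ω, ZD (ZD (Cplx (fun q => (JF f1 f2 q)⁻¹))) p = 0) ∧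
    (∀ p ∈ Ω, SCR f1 f2 p = 0) := by
  let F := CF f1 f2
  let G : antiCR Ω := ⟨star F, hconf.star_CF_mem_antiCR hΩ⟩
  let W : antiCR Ω := ⟨contactPotential f1 f2 f3, hconf.contactPotential_mem_antiCR hΩ⟩
  have solution {u : Heis → ℝ} (α β : antiCR Ω) (hu : ∀ p ∈ Ω, (u p : ℂ) = α.1 p + β.1 p * F p) :
      ∀ p ∈ Ω, ZD (ZD (Cplx fun q => (JF f1 f2 q)⁻¹ * u q)) p = 0 := fun p hp =>
    (hconf.inv_JF_mul_mem_zAffine hΩ α.2 β.2 hu p hp).2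
  have hJ : ∀ p ∈ Ω, ZD (ZD (Cplx fun q => (JF f1 f2 q)⁻¹)) p = 0 := by
    simpa using solution (u := fun _ => 1) 1 0 (by simp)
  refine ⟨solution (W ^ 2) ((2 * I) • (G * W)) fun p _ => ?_,
    solution ((I / 2) • (G * W)) (-((I / 2) • W + G ^ 2)) fun p _ => ?_,
    solution ((1 / 2 : ℂ) • (G * W)) ((1 / 2 : ℂ) • W + I • G ^ 2) fun p _ => ?_,
    solution 0 G fun p _ => ?_,
    solution ((1 / 2 : ℂ) • G) (algebraMap ℂ _ (1 / 2)) fun p _ => ?_,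
    solution ((I / 2) • G) (algebraMap ℂ _ (-(I / 2))) fun p _ => ?_,
    solution W (I • G) fun p _ => ?_,
    hJ, fun p hp => mul_eq_zero_of_right _ (hJ p hp)⟩
  all_goals apply Complex.ext <;> simp [F, G, W, contactPotential, CF, Cplx, pow_two] <;> ring
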